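/- Consider the Kalman filter recursion on ℝ^η: let P₀ be a symmetric positive semidefinite η×η real matrix, and for each k ≥ 0 let H_k be an η×η real matrix, R_k a symmetric positive definite η×η real matrix, Φ_k an η×η real matrix, and Q̌ a symmetric positive semidefinite η×η matrix; define K_k = P_k·H_kᵀ·(H_k·P_k·H_kᵀ + R_k)⁻¹, P₊_k = (I − K_k·H_k)·P_k, and P_{k+1} = Φ_k·P₊_k·Φ_kᵀ + Q̌, and assume each P_{k+1} is invertible. Let L_k = P₊_k·Φ_kᵀ·P_{k+1}⁻¹ be the RTS smoother gains and set Φ₋₁ = I. Then for every k ≥ 0, the ordered product satisfies L₀·L₁·⋯·L_k = P₀·[Φ₋₁ᵀ·(I − K₀·H₀)ᵀ · Φ₀ᵀ·(I − K₁·H₁)ᵀ · ⋯ · Φ_{k−1}ᵀ·(I − K_k·H_k)ᵀ]·Φ_kᵀ·P_{k+1}⁻¹, with all products ordered with increasing index from left to right. (This is the inverse-reduced smoother-gain-accumulator identity underlying the efficient observed-control algorithm.) -/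

import Mathlib

open Matrix

/-!
In Joseph form the posterior covariance is `(1 - K H) P (1 - K H)ᴴ + K R Kᴴ`, which is manifestly
Hermitian, so the posterior can also be written `P (1 - K H)ᴴ`. The smoother gains therefore satisfy
`L k * P (k + 1) = P k * (1 - K k * H k)ᴴ * (Φ k)ᴴ`, and in `L 0 * ⋯ * L k * P (k + 1)` the prior
covariance moves to the left past one factor after the other, each `L i` being replaced by
`(1 - K i * H i)ᴴ * (Φ i)ᴴ`. The Joseph form also preserves positivity, so the innovation covariance
is positive definite and the gain formula does solve the normal equation.
-/

section Monoid

variable {M : Type*} [Monoid M]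

theorem prod_range_mul_eq_mul_prod_range {L P B : ℕ → M} (h : ∀ k, L k * P (k + 1) = P k * B k)
    (k : ℕ) : ((List.range k).map L).prod * P k = P 0 * ((List.range k).map B).prod := by
  induction k with
  | zero => simp
  | succ k ih =>
    rw [List.prod_range_succ, List.prod_range_succ, mul_assoc, h, ← mul_assoc, ih, mul_assoc]

theorem prod_range_pred_mul_mul_eq_prod_range_mul (F A : ℕ → M) (k : ℕ) :
    ((List.range (k + 1)).map fun i => (if i = 0 then 1 else F (i - 1)) * A i).prod * F k =
      ((List.range (k + 1)).map fun i => A i * F i).prod := by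
  induction k with
  | zero => simp
  | succ k ih =>
    rw [List.prod_range_succ, List.prod_range_succ _ (k + 1), ← ih]
    simp only [k.succ_ne_zero, if_false, Nat.add_sub_cancel, mul_assoc]

end Monoid

section Gain

variable {α m n : Type*} [Fintype m] [Fintype n]

section Ring

variable [Ring α] [StarRing α]

/-- `K` is an optimal (Kalman) gain for prior covariance `P`, measurement sensitivity `H` and
measurement noise covariance `R`. The usual formula `K = P Hᴴ (H P Hᴴ + R)⁻¹` is encoded by the
normal equation it solves, which makes sense without invertibility of the innovation covariance
`H P Hᴴ + R`. -/
def IsKalmanGain (P : Matrix n n α) (H : Matrix m n α) (R : Matrix m m α) (K : Matrix n m α) :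
    Prop :=
  K * (H * P * Hᴴ + R) = P * Hᴴ

variable [DecidableEq n]

/-- The covariance of the filtered estimate after a measurement update with gain `K`, in the form
valid for an optimal gain. -/
def posteriorCov (P : Matrix n n α) (H : Matrix m n α) (K : Matrix n m α) : Matrix n n α :=
  (1 - K * H) * P

namespace IsKalmanGain

variable {P : Matrix n n α} {H : Matrix m n α} {R : Matrix m m α} {K : Matrix n m α}

theorem posteriorCov_mul_conjTranspose (h : IsKalmanGain P H R K) :
    posteriorCov P H K * Hᴴ = K * R := by
  have hKR : K * R = P * Hᴴ - K * (H * P * Hᴴ) := by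
    rw [← h, Matrix.mul_add, add_sub_cancel_left]
  simp only [hKR, posteriorCov, Matrix.sub_mul, Matrix.one_mul, Matrix.mul_assoc]

theorem posteriorCov_eq_joseph (h : IsKalmanGain P H R K) :
    posteriorCov P H K = (1 - K * H) * P * (1 - K * H)ᴴ + K * R * Kᴴ :=
  calc
    posteriorCov P H K = posteriorCov P H K * (1 - K * H)ᴴ + posteriorCov P H K * Hᴴ * Kᴴ := by
      simp only [conjTranspose_sub, conjTranspose_one, conjTranspose_mul, Matrix.mul_sub,
        Matrix.mul_one, Matrix.mul_assoc, sub_add_cancel]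
    _ = (1 - K * H) * P * (1 - K * H)ᴴ + K * R * Kᴴ := by
      rw [h.posteriorCov_mul_conjTranspose, posteriorCov]

theorem isHermitian_posteriorCov (h : IsKalmanGain P H R K) (hP : P.IsHermitian)
    (hR : R.IsHermitian) : (posteriorCov P H K).IsHermitian := by
  rw [h.posteriorCov_eq_joseph]
  exact (isHermitian_mul_mul_conjTranspose _ hP).add (isHermitian_mul_mul_conjTranspose _ hR)

theorem posSemidef_posteriorCov [PartialOrder α] [AddLeftMono α] (h : IsKalmanGain P H R K)
    (hP : P.PosSemidef) (hR : R.PosSemidef) : (posteriorCov P H K).PosSemidef := by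
  rw [h.posteriorCov_eq_joseph]
  exact (hP.mul_mul_conjTranspose_same _).add (hR.mul_mul_conjTranspose_same _)

theorem posteriorCov_eq_mul_conjTranspose (h : IsKalmanGain P H R K) (hP : P.IsHermitian)
    (hR : R.IsHermitian) : posteriorCov P H K = P * (1 - K * H)ᴴ := by
  rw [← (h.isHermitian_posteriorCov hP hR).eq, posteriorCov, conjTranspose_mul, hP.eq]

end IsKalmanGain

end Ring

theorem isKalmanGain_mul_inv [Field α] [StarRing α] [PartialOrder α] [AddLeftMono α]
    [DecidableEq m] {P : Matrix n n α} {R : Matrix m m α} (H : Matrix m n α)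
    (hP : P.PosSemidef) (hR : R.PosDef) :
    IsKalmanGain P H R (P * Hᴴ * (H * P * Hᴴ + R)⁻¹) :=
  have hS : (H * P * Hᴴ + R).PosDef := hR.posSemidef_add (hP.mul_mul_conjTranspose_same H)
  nonsing_inv_mul_cancel_right _ _ ((isUnit_iff_isUnit_det _).mp hS.isUnit)

end Gain

section Recursion

variable {α n : Type*} [Fintype n] [DecidableEq n] {m : ℕ → Type*}
  [∀ k, Fintype (m k)]

theorem isHermitian_priorCov [Ring α] [StarRing α] {P Pp Φ Q : ℕ → Matrix n n α}
    {H : ∀ k, Matrix (m k) n α} {R : ∀ k, Matrix (m k) (m k) α} {K : ∀ k, Matrix n (m k) α}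
    (hP0 : (P 0).IsHermitian) (hR : ∀ k, (R k).IsHermitian) (hQ : ∀ k, (Q k).IsHermitian)
    (hK : ∀ k, IsKalmanGain (P k) (H k) (R k) (K k))
    (hPp : ∀ k, Pp k = posteriorCov (P k) (H k) (K k))
    (hP : ∀ k, P (k + 1) = Φ k * Pp k * (Φ k)ᴴ + Q k) (k : ℕ) : (P k).IsHermitian := by
  induction k with
  | zero => exact hP0
  | succ k ih =>
    rw [hP, hPp]
    exact (isHermitian_mul_mul_conjTranspose _
      ((hK k).isHermitian_posteriorCov ih (hR k))).add (hQ k)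

section Field

variable [Field α] [StarRing α] [PartialOrder α] [AddLeftMono α] [∀ k, DecidableEq (m k)]
  {P Pp Φ Q : ℕ → Matrix n n α} {H : ∀ k, Matrix (m k) n α} {R : ∀ k, Matrix (m k) (m k) α}
  {K : ∀ k, Matrix n (m k) α}

theorem posSemidef_priorCov (hP0 : (P 0).PosSemidef) (hR : ∀ k, (R k).PosDef)
    (hQ : ∀ k, (Q k).PosSemidef)
    (hK : ∀ k, K k = P k * (H k)ᴴ * (H k * P k * (H k)ᴴ + R k)⁻¹)
    (hPp : ∀ k, Pp k = posteriorCov (P k) (H k) (K k))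
    (hP : ∀ k, P (k + 1) = Φ k * Pp k * (Φ k)ᴴ + Q k) (k : ℕ) : (P k).PosSemidef := by
  induction k with
  | zero => exact hP0
  | succ k ih =>
    rw [hP, hPp, hK]
    exact (((isKalmanGain_mul_inv (H k) ih (hR k)).posSemidef_posteriorCov ih
      (hR k).posSemidef).mul_mul_conjTranspose_same _).add (hQ k)

theorem isKalmanGain_of_recursion (hP0 : (P 0).PosSemidef) (hR : ∀ k, (R k).PosDef)
    (hQ : ∀ k, (Q k).PosSemidef)
    (hK : ∀ k, K k = P k * (H k)ᴴ * (H k * P k * (H k)ᴴ + R k)⁻¹)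
    (hPp : ∀ k, Pp k = posteriorCov (P k) (H k) (K k))
    (hP : ∀ k, P (k + 1) = Φ k * Pp k * (Φ k)ᴴ + Q k) (k : ℕ) :
    IsKalmanGain (P k) (H k) (R k) (K k) := by
  rw [hK]
  exact isKalmanGain_mul_inv (H k) (posSemidef_priorCov hP0 hR hQ hK hPp hP k) (hR k)

end Field

theorem stmt8_general [Ring α] [StarRing α] {P Pp L Φ Q : ℕ → Matrix n n α}
    {H : ∀ k, Matrix (m k) n α} {R : ∀ k, Matrix (m k) (m k) α} {K : ∀ k, Matrix n (m k) α}
    (hP0 : (P 0).IsHermitian) (hR : ∀ k, (R k).IsHermitian) (hQ : ∀ k, (Q k).IsHermitian)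
    (hK : ∀ k, IsKalmanGain (P k) (H k) (R k) (K k))
    (hPp : ∀ k, Pp k = posteriorCov (P k) (H k) (K k))
    (hP : ∀ k, P (k + 1) = Φ k * Pp k * (Φ k)ᴴ + Q k)
    (hL : ∀ k, L k * P (k + 1) = Pp k * (Φ k)ᴴ) (k : ℕ) :
    ((List.range (k + 1)).map L).prod * P (k + 1) =
      P 0 *
        ((List.range (k + 1)).map fun i =>
          (if i = 0 then 1 else Φ (i - 1))ᴴ * (1 - K i * H i)ᴴ).prod *
        (Φ k)ᴴ := by
  have hLP (k : ℕ) : L k * P (k + 1) = P k * ((1 - K k * H k)ᴴ * (Φ k)ᴴ) := by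
    rw [hL, hPp, (hK k).posteriorCov_eq_mul_conjTranspose
      (isHermitian_priorCov hP0 hR hQ hK hPp hP k) (hR k), Matrix.mul_assoc]
  simp only [apply_ite conjTranspose, conjTranspose_one]
  rw [prod_range_mul_eq_mul_prod_range hLP, Matrix.mul_assoc,
    prod_range_pred_mul_mul_eq_prod_range_mul (fun i => (Φ i)ᴴ)]

end Recursion

/-- For the Kalman filter recursion with prior covariances `P k`, gains
`K k = P k * (H k)ᵀ * (H k * P k * (H k)ᵀ + R k)⁻¹`, posteriors `Pp k = (I - K k * H k) * P k`,
propagation `P (k+1) = Φ k * Pp k * (Φ k)ᵀ + Q̌` (with `P 0` symmetric PSD, `R k` symmetric PD,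
`Q̌` symmetric PSD, and each `P (k+1)` invertible), and RTS smoother gains
`L k = Pp k * (Φ k)ᵀ * (P (k+1))⁻¹`, the ordered product satisfies, for every `k`,
`L 0 * ⋯ * L k = P 0 * (∏ i = 0..k, (Φ (i-1))ᵀ * (I - K i * H i)ᵀ) * (Φ k)ᵀ * (P (k+1))⁻¹`,
where `Φ (-1) = I` and all products are ordered with increasing index from left to right. -/
theorem stmt8 {η : ℕ} (P K Pp L H R Φ : ℕ → Matrix (Fin η) (Fin η) ℝ)
    (Q : Matrix (Fin η) (Fin η) ℝ)
    (hP0 : (P 0).PosSemidef) (hR : ∀ k, (R k).PosDef) (hQ : Q.PosSemidef)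
    (hK : ∀ k, K k = P k * (H k)ᵀ * (H k * P k * (H k)ᵀ + R k)⁻¹)
    (hPp : ∀ k, Pp k = (1 - K k * H k) * P k)
    (hP : ∀ k, P (k + 1) = Φ k * Pp k * (Φ k)ᵀ + Q)
    (hinv : ∀ k, IsUnit (P (k + 1)).det)
    (hL : ∀ k, L k = Pp k * (Φ k)ᵀ * (P (k + 1))⁻¹) :
    ∀ k, ((List.range (k + 1)).map L).prod =
      P 0 *
        ((List.range (k + 1)).map (fun i =>
          (if i = 0 then (1 : Matrix (Fin η) (Fin η) ℝ) else Φ (i - 1))ᵀ *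
            (1 - K i * H i)ᵀ)).prod *
        (Φ k)ᵀ * (P (k + 1))⁻¹ := by
  simp only [← conjTranspose_eq_transpose_of_trivial] at *
  have hgain := isKalmanGain_of_recursion hP0 hR (fun _ => hQ) hK hPp hP
  have hLP (k : ℕ) : L k * P (k + 1) = Pp k * (Φ k)ᴴ := by
    rw [hL, nonsing_inv_mul_cancel_right _ _ (hinv k)]
  intro k
  rw [← stmt8_general hP0.isHermitian (fun k => (hR k).isHermitian) (fun _ => hQ.isHermitian)
    hgain hPp hP hLP, mul_nonsing_inv_cancel_right _ _ (hinv k)]
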